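/- arXiv:1608.04666 — 2 statements merged into one kernel-verified Lean document; each statement's English description precedes it below -/
import Mathlib

section
/- Let F be a field, n a positive integer with n ≠ 2, and A an n×n matrix over F. If A is singular (not invertible), then there exist nilpotent n×n matrices N₁ and N₂ over F such that A = N₁N₂. -/
/-!
Split `V = U ⊕ W` and write `A` in blocks. If
`A = [[J * J', J * Q], [P * J', P * Q + M * N]]` with `J`, `J'`, `M`, `N` nilpotent, then
`A = [[J, 0], [P, M]] * [[J', Q], [0, N]]`, and both factors are nilpotent.

If `ker A` is not contained in `range A`, then `A` has the shape `[[0, 0], [0, B]]` on a splitting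
with `U` a line. Taking `J = J' = 0`, it suffices to subtract from `B` a map `P * Q` of rank one so
that the difference again has a kernel not contained in its range, and to induct on the dimension.

Otherwise `ker A ≤ range A`, and for `dim V ≥ 3` one can choose `U` to be a plane on which
`A = [[0, J * Q], [P * J, D]]` for `J = [[0, 1], [0, 0]]`. Here one column of `P` and one row of `Q`
are still free, and they are chosen so that `D - P * Q` falls under the first case.
-/

open Module LinearMap Submodule

/-- The property of being a product of two nilpotent elements. -/
def IsProductOfTwoNilpotents {R : Type*} [MonoidWithZero R] (a : R) : Prop :=
  ∃ b c : R, IsNilpotent b ∧ IsNilpotent c ∧ a = b * c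

theorem IsProductOfTwoNilpotents.zero {R : Type*} [MonoidWithZero R] :
    IsProductOfTwoNilpotents (0 : R) :=
  ⟨0, 0, .zero, .zero, (mul_zero 0).symm⟩

theorem IsProductOfTwoNilpotents.map {R S F : Type*} [MonoidWithZero R] [MonoidWithZero S]
    [FunLike F R S] [MonoidWithZeroHomClass F R S] {a : R} (ha : IsProductOfTwoNilpotents a)
    (φ : F) : IsProductOfTwoNilpotents (φ a) := by
  obtain ⟨b, c, hb, hc, rfl⟩ := ha
  exact ⟨φ b, φ c, hb.map φ, hc.map φ, map_mul φ b c⟩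

theorem exists_notMem_and_notMem_of_ne_top {R M : Type*} [Ring R] [AddCommGroup M]
    [Module R M] {p q : Submodule R M} (hp : p ≠ ⊤) (hq : q ≠ ⊤) : ∃ x, x ∉ p ∧ x ∉ q := by
  by_contra! h
  have hpq : ((⊤ : Submodule R M) : Set M) ⊆ p ∪ q := fun x _ ↦ or_iff_not_imp_left.mpr (h x)
  exact (AddSubgroupClass.subset_union.mp hpq).elim (hp ∘ top_le_iff.mp) (hq ∘ top_le_iff.mp)

theorem isNilpotent_of_exact {R U V W : Type*} [Semiring R] [AddCommMonoid U] [Module R U]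
    [AddCommMonoid V] [Module R V] [AddCommMonoid W] [Module R W]
    {i : U →ₗ[R] V} {p : V →ₗ[R] W} (hip : Function.Exact i p)
    {S : End R U} {T : End R V} {S' : End R W} (hi : T ∘ₗ i = i ∘ₗ S) (hp : S' ∘ₗ p = p ∘ₗ T)
    (hS : IsNilpotent S) (hS' : IsNilpotent S') : IsNilpotent T := by
  obtain ⟨m, hm⟩ := hS
  obtain ⟨n, hn⟩ := hS'
  refine ⟨m + n, LinearMap.ext fun x ↦ ?_⟩
  have hpx : p ((T ^ n) x) = 0 := by
    simpa [hn] using (LinearMap.congr_fun (End.commute_pow_left_of_commute hp n) x).symm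
  obtain ⟨y, hy⟩ := (hip _).mp hpx
  simpa [pow_add, ← hy, hm] using LinearMap.congr_fun (End.commute_pow_left_of_commute hi m) y

section Splitting

variable {R U V : Type*} [Ring R] [AddCommGroup U] [Module R U] [AddCommGroup V] [Module R V]
  {σ : U →ₗ[R] V} {π : V →ₗ[R] U}

/-- The projection onto `ker π` along the range of a section `σ` of `π`. -/
def kerProj (hσ : Function.LeftInverse π σ) : V →ₗ[R] ker π :=
  (LinearMap.id - σ ∘ₗ π).codRestrict (ker π) fun x ↦ by simp [hσ.eq]

@[simp]
theorem coe_kerProj_apply (hσ : Function.LeftInverse π σ) (x : V) :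
    (kerProj hσ x : V) = x - σ (π x) := rfl

@[simp]
theorem kerProj_apply_section (hσ : Function.LeftInverse π σ) (u : U) : kerProj hσ (σ u) = 0 :=
  Subtype.ext <| by simp [hσ.eq]

@[simp]
theorem kerProj_apply_coe (hσ : Function.LeftInverse π σ) (w : ker π) : kerProj hσ w = w :=
  Subtype.ext <| by simp

theorem exact_section_kerProj (hσ : Function.LeftInverse π σ) :
    Function.Exact σ (kerProj hσ) := fun x ↦
  ⟨fun hx ↦ ⟨π x, (sub_eq_zero.mp (congrArg Subtype.val hx)).symm⟩, by
    rintro ⟨u, rfl⟩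
    exact kerProj_apply_section hσ u⟩

theorem IsProductOfTwoNilpotents.of_splitting (hσ : Function.LeftInverse π σ) {A : End R V}
    {J J' : End R U} {X : End R (ker π)} {P : U →ₗ[R] ker π} {Q : ker π →ₗ[R] U}
    (hJ : IsNilpotent J) (hJ' : IsNilpotent J') (hX : IsProductOfTwoNilpotents X)
    (hAσ : ∀ u, A (σ u) = σ (J (J' u)) + P (J' u))
    (hAker : ∀ w : ker π, A w = σ (J (Q w)) + (P (Q w) + X w)) :
    IsProductOfTwoNilpotents A := by
  obtain ⟨M, N, hM, hN, rfl⟩ := hX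
  let ι := (ker π).subtype
  let κ := kerProj hσ
  refine ⟨σ ∘ₗ J ∘ₗ π + ι ∘ₗ P ∘ₗ π + ι ∘ₗ M ∘ₗ κ, σ ∘ₗ J' ∘ₗ π + σ ∘ₗ Q ∘ₗ κ + ι ∘ₗ N ∘ₗ κ,
    isNilpotent_of_exact (exact_subtype_ker_map π) ?_ ?_ hM hJ,
    isNilpotent_of_exact (exact_section_kerProj hσ) ?_ ?_ hJ' hN, ?_⟩
  · ext w; simp [ι, κ]
  · ext x; simp [ι, κ, hσ.eq]
  · ext u; simp [κ, hσ.eq]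
  · ext x; simp [ι, κ]
  · ext x
    have hAx : A x = A (σ (π x)) + A (κ x) := by simp [κ]
    rw [hAx, hAσ, hAker]
    simp [ι, κ, hσ.eq, add_assoc, add_left_comm]

end Splitting

section DivisionRing

variable {K V : Type*} [DivisionRing K] [AddCommGroup V] [Module K V]

theorem exists_dual_eq_one_of_notMem {p : Submodule K V} {x : V} (hx : x ∉ p) :
    ∃ f : V →ₗ[K] K, f x = 1 ∧ ∀ y ∈ p, f y = 0 := by
  obtain ⟨f, hfx, hf⟩ := exists_le_ker_of_notMem hx
  exact ⟨f.smulRight (f x)⁻¹, by simp [hfx], fun y hy ↦ by simp [mem_ker.mp (hf hy)]⟩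

theorem exists_dual_eq_one_and_ne_zero {x y : V} (hx : x ≠ 0) (hy : y ≠ 0) :
    ∃ f : V →ₗ[K] K, f x = 1 ∧ f y ≠ 0 := by
  obtain ⟨f, hfx, -⟩ := exists_dual_eq_one_of_notMem (p := (⊥ : Submodule K V)) hx
  by_cases hfy : f y = 0
  · have hyx : y ∉ K ∙ x := by
      rw [mem_span_singleton]
      rintro ⟨a, rfl⟩
      simp_all
    obtain ⟨g, hgy, hg⟩ := exists_dual_eq_one_of_notMem hyx
    exact ⟨f + g, by simp [hfx, hg x (mem_span_singleton_self x)], by simp [hfy, hgy]⟩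
  · exact ⟨f, hfx, hfy⟩

theorem exists_not_ker_sub_smulRight_le_range {A : End K V} {e c : V} (he : e ≠ 0) (hc : c ≠ 0)
    (hAe : A e ∈ K ∙ c) :
    ∃ q : V →ₗ[K] K, ¬ ker (A - q.smulRight c) ≤ range (A - q.smulRight c) := by
  obtain ⟨t, ht⟩ := mem_span_singleton.mp hAe
  obtain ⟨f, hfe, hfc⟩ := exists_dual_eq_one_and_ne_zero (K := K) he hc
  refine ⟨(f ∘ₗ A).smulRight (f c)⁻¹, fun hle ↦ ?_⟩
  obtain ⟨x, hx⟩ := hle (show e ∈ ker _ by simp [← ht, hfc])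
  have hfx : f e = 0 := by simp [← hx, hfc]
  exact one_ne_zero (hfe.symm.trans hfx)

theorem isProductOfTwoNilpotents_of_not_ker_le_range {V : Type*} [AddCommGroup V] [Module K V]
    [FiniteDimensional K V] {A : End K V} (hA : ¬ ker A ≤ range A) :
    IsProductOfTwoNilpotents A := by
  by_cases hA₀ : A = 0
  · exact hA₀ ▸ .zero
  obtain ⟨v, hv⟩ : ∃ v, A v ≠ 0 := DFunLike.ne_iff.mp hA₀
  obtain ⟨e, hAe : A e = 0, he⟩ := SetLike.not_le_iff_exists.mp hA
  obtain ⟨f, hfe, hf⟩ := exists_dual_eq_one_of_notMem he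
  have hfA (x : V) : f (A x) = 0 := hf _ (mem_range_self A x)
  have hσ : Function.LeftInverse f (toSpanSingleton K V e) := fun t ↦ by simp [hfe]
  let B : End K (ker f) := kerProj hσ ∘ₗ A ∘ₗ (ker f).subtype
  have hB (w : ker f) : (B w : V) = A w := by simp [B, hfA]
  let w := kerProj hσ v
  have hBw : B w ≠ 0 := by simpa [← Subtype.coe_ne_coe, hB, w, hAe] using hv
  have hw : w ≠ 0 := fun h ↦ hBw (by rw [h, map_zero])
  obtain ⟨q, hq⟩ :=
    exists_not_ker_sub_smulRight_le_range (A := B) hw hBw (mem_span_singleton_self _)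
  exact .of_splitting hσ (J := 0) (J' := 0) (P := toSpanSingleton K _ (B w)) (Q := q) .zero .zero
    (isProductOfTwoNilpotents_of_not_ker_le_range hq) (fun t ↦ by simp [hAe])
    (fun x ↦ by simp [hB])
termination_by finrank K V
decreasing_by exact finrank_lt fun h ↦ by simp [ker_eq_top.mp h] at hfe

variable [FiniteDimensional K V]

theorem isProductOfTwoNilpotents_of_biorthogonal {A : End K V} {e u : V} {f g : V →ₗ[K] K}
    (hAe : A e = 0) (he : e ∈ range A) (hAu : A u ≠ 0) (hfe : f e = 1) (hfu : f u = 0)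
    (hfAu : f (A u) = 0) (hgu : g u = 1) (hgA : ∀ x, g (A x) = 0) :
    IsProductOfTwoNilpotents A := by
  obtain ⟨v, hv⟩ := he
  have hge : g e = 0 := hv ▸ hgA v
  have hσ : Function.LeftInverse (f.prod g)
      ((toSpanSingleton K V e).coprod (toSpanSingleton K V u)) := fun t ↦ by
    simp [hfe, hfu, hge, hgu]
  let D : End K (ker (f.prod g)) := kerProj hσ ∘ₗ A ∘ₗ (ker (f.prod g)).subtype
  let ρ : ker (f.prod g) →ₗ[K] K := f ∘ₗ A ∘ₗ (ker (f.prod g)).subtype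
  have hD (w : ker (f.prod g)) : A w = ρ w • e + D w := by simp [D, ρ, hgA]
  let c : ker (f.prod g) := ⟨A u, by simp [hfAu, hgA]⟩
  let w := kerProj hσ v
  have hρw : ρ w = 1 := by simp [ρ, w, hv, hAe, hfe, hfAu]
  obtain ⟨z, hz⟩ := exists_not_ker_sub_smulRight_le_range (A := D - ρ.smulRight (D w))
    (e := w) (c := c) (fun h ↦ by simp [h] at hρw) (by simpa [c, ← Subtype.coe_ne_coe] using hAu)
    (by simp [hρw])
  have hJ : IsNilpotent (inl K K K ∘ₗ snd K K K) := ⟨2, by ext <;> simp [pow_two]⟩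
  refine .of_splitting hσ hJ hJ (Q := z.prod ρ)
    (P := (toSpanSingleton K _ c).coprod (toSpanSingleton K _ (D w)))
    (isProductOfTwoNilpotents_of_not_ker_le_range hz) (fun t ↦ ?_) (fun x ↦ ?_)
  · simp [hAe, c]
  · simp only [hD, prod_apply, Function.prod_apply, coe_comp, coe_inl, coe_snd,
      Function.comp_apply, coprod_apply, toSpanSingleton_apply, zero_smul, add_zero, coe_add,
      SetLike.val_smul, LinearMap.sub_apply, coe_smulRight, AddSubgroupClass.coe_sub]
    abel

theorem isProductOfTwoNilpotents_of_ker_le_range (hV : 2 < finrank K V) {A : End K V}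
    (hA : ker A ≠ ⊥) (hle : ker A ≤ range A) : IsProductOfTwoNilpotents A := by
  obtain ⟨e, hAe : A e = 0, he⟩ := exists_mem_ne_zero_of_ne_bot hA
  have hrange : range A ≠ ⊤ := mt ker_eq_bot_iff_range_eq_top.mpr hA
  have hcomap : (K ∙ e).comap A ≠ ⊤ := fun htop ↦ by
    have hrange_le : range A ≤ K ∙ e := by
      rw [range_eq_map, map_le_iff_le_comap, htop]
    have := finrank_mono hrange_le
    have := finrank_mono hle
    have := finrank_range_add_finrank_ker A
    have := finrank_span_singleton (K := K) he
    omega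
  obtain ⟨u, hu, hAu⟩ := exists_notMem_and_notMem_of_ne_top hrange hcomap
  obtain ⟨g, hgu, hg⟩ := exists_dual_eq_one_of_notMem hu
  have heAu : e ∉ K ∙ A u := fun h ↦ by
    obtain ⟨a, rfl⟩ := mem_span_singleton.mp h
    have ha : a ≠ 0 := fun h ↦ by simp [h] at he
    exact hAu (mem_span_singleton.mpr ⟨a⁻¹, inv_smul_smul₀ ha _⟩)
  obtain ⟨f, hfe, hf⟩ := exists_dual_eq_one_of_notMem heAu
  have hgA (x : V) : g (A x) = 0 := hg _ (mem_range_self A x)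
  have hge : g e = 0 := hg e (hle hAe)
  have hfAu : f (A u) = 0 := hf _ (mem_span_singleton_self _)
  have hAu₀ : A u ≠ 0 := fun h ↦ hAu (by simp [h])
  exact isProductOfTwoNilpotents_of_biorthogonal (f := f - g.smulRight (f u)) hAe (hle hAe) hAu₀
    (by simp [hfe, hge]) (by simp [hgu]) (by simp [hfAu, hgA]) hgu hgA

theorem singular_is_product_of_two_nilpotents_general (hV : finrank K V ≠ 2) {A : End K V}
    (hA : ¬ IsUnit A) : IsProductOfTwoNilpotents A := by
  by_cases hle : ker A ≤ range A
  · have hker : ker A ≠ ⊥ := mt (isUnit_iff_ker_eq_bot A).mpr hA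
    have := one_le_finrank_iff.mpr hker
    have := finrank_mono hle
    have := finrank_range_add_finrank_ker A
    exact isProductOfTwoNilpotents_of_ker_le_range (by omega) hker hle
  · exact isProductOfTwoNilpotents_of_not_ker_le_range hle

end DivisionRing

/-- For `n ≠ 2`, every singular `n × n` matrix over a field is a product of two
nilpotent matrices. -/
theorem singular_is_product_of_two_nilpotents
    (F : Type*) [Field F] (n : ℕ) (hn : 0 < n) (hn2 : n ≠ 2)
    (A : Matrix (Fin n) (Fin n) F) (hA : ¬ IsUnit A) :
    ∃ N₁ N₂ : Matrix (Fin n) (Fin n) F,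
      IsNilpotent N₁ ∧ IsNilpotent N₂ ∧ A = N₁ * N₂ := by
  let Φ := Matrix.toLinAlgEquiv' (R := F) (n := Fin n)
  have hΦA : IsProductOfTwoNilpotents (Φ A) :=
    singular_is_product_of_two_nilpotents_general (by simpa using hn2)
      (by rwa [MulEquiv.isUnit_map])
  exact Φ.symm_apply_apply A ▸ hΦA.map Φ.symm
end

section
/- Let F be a field and n a positive integer with n ≠ 2. Every nilpotent n×n matrix N over F is a product of two nilpotent n×n matrices over F, each of rank equal to rank(N). -/
/-!
It suffices to find `S` and `T` with `N * S` and `T * N` nilpotent and `N * S * (T * N) = N`, since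
these two factors then have the rank of `N`. This is done by induction on the dimension. If
`N ^ 2 ≠ 0`, there are a functional `f` vanishing on `ker N` and on `range (N ^ 2)`, and a vector
`w` with `f w = f (N w) = 1`; compressing `N` to `ker f` along `N w` gives a nilpotent endomorphism
of a hyperplane, and a factorization of the compression lifts to one of `N`. The induction stops
at the `3 × 3` Jordan block, which is factored by hand, and at `N ^ 2 = 0`, where in dimension at
least three `ker N` is too large to be spanned by a vector of `range N`, and the spare direction
in the kernel closes up a nilpotent shift on a complement of `ker N`.
-/

open Module
open LinearMap (ker range)

/-- `a` is a product of two nilpotent elements `a * s` and `t * a`. Requiring the factors to be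
multiples of `a` encodes the rank condition without mentioning rank: for a matrix `a` over a field
it forces both factors to have the rank of `a`. -/
def HasNilpotentFactorization {M : Type*} [MonoidWithZero M] (a : M) : Prop :=
  ∃ s t : M, IsNilpotent (a * s) ∧ IsNilpotent (t * a) ∧ a * s * (t * a) = a

lemma hasNilpotentFactorization_zero {M : Type*} [MonoidWithZero M] :
    HasNilpotentFactorization (0 : M) :=
  ⟨0, 0, by simp, by simp, by simp⟩

lemma HasNilpotentFactorization.map {M M' G : Type*} [MonoidWithZero M] [MonoidWithZero M']
    [FunLike G M M'] [MonoidWithZeroHomClass G M M'] {a : M} (h : HasNilpotentFactorization a)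
    (φ : G) : HasNilpotentFactorization (φ a) := by
  obtain ⟨s, t, hs, ht, hst⟩ := h
  exact ⟨φ s, φ t, by simpa only [map_mul] using hs.map φ, by simpa only [map_mul] using ht.map φ,
    by simp only [← map_mul, hst]⟩

lemma isNilpotent_of_mul_self_eq_mul {M : Type*} [MonoidWithZero M] {a b : M} (hb : IsNilpotent b)
    (hab : a * a = b * a) : IsNilpotent a := by
  obtain ⟨m, hm⟩ := hb
  have h : SemiconjBy a a b := hab
  exact ⟨m + 1, by rw [pow_succ', (h.pow_right m).eq, hm, zero_mul]⟩

section Ring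

variable {R V W U : Type*} [Ring R] [AddCommGroup V] [Module R V] [AddCommGroup W] [Module R W]
  [AddCommGroup U] [Module R U]

lemma isNilpotent_comp_swap {f : W →ₗ[R] V} {g : V →ₗ[R] W} (h : IsNilpotent (g ∘ₗ f : End R W)) :
    IsNilpotent (f ∘ₗ g : End R V) := by
  obtain ⟨m, hm⟩ := h
  have hpow := End.commute_pow_left_of_commute (LinearMap.comp_assoc f g f) m
  refine ⟨m + 1, ?_⟩
  rw [pow_succ, End.mul_eq_comp, ← LinearMap.comp_assoc, hpow, hm, LinearMap.comp_zero,
    LinearMap.zero_comp]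

lemma ker_ne_bot_of_isNilpotent [Nontrivial V] {A : End R V} (hA : IsNilpotent A) :
    ker A ≠ ⊥ := by
  intro h
  obtain ⟨m, hm⟩ := hA
  obtain ⟨v, hv⟩ := exists_ne (0 : V)
  exact hv ((LinearMap.ker_eq_bot.1 h).iterate m (by simp [← End.pow_apply, hm]))

lemma exists_mem_ker_notMem_range_of_isNilpotent [Nontrivial V] {a s t : End R V}
    (hs : IsNilpotent (a * s)) (hst : a * s * (t * a) = a) :
    ∃ c ∈ ker (a * s), c ∉ range (t * a) := by
  obtain ⟨c, hc, hc0⟩ := Submodule.exists_mem_ne_zero_of_ne_bot (ker_ne_bot_of_isNilpotent hs)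
  refine ⟨c, hc, ?_⟩
  rintro ⟨u, rfl⟩
  have hu : a u = 0 := by rwa [LinearMap.mem_ker, ← End.mul_apply, hst] at hc
  exact hc0 (by simp [hu])

lemma exists_pow_apply_notMem_range_pow_succ {N : End R V} (hN : IsNilpotent N) {i : ℕ}
    (hi : N ^ i ≠ 0) : ∃ w, (N ^ i) w ∉ range (N ^ (i + 1)) := by
  by_contra! h
  have hrange (k : ℕ) : range (N ^ i) ≤ range (N ^ (i + k)) := by
    induction k with
    | zero => rfl
    | succ k ih =>
      rintro _ ⟨w, rfl⟩
      obtain ⟨y, hy⟩ := ih ⟨w, rfl⟩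
      obtain ⟨z, hz⟩ := h y
      refine ⟨z, ?_⟩
      rw [← hy, add_comm i k, pow_add _ k i, End.mul_apply, ← hz, ← End.mul_apply, ← pow_add,
        add_left_comm]
  obtain ⟨m, hm⟩ := hN
  have hbot := hrange m
  rw [pow_add, hm, mul_zero, LinearMap.range_zero, le_bot_iff, LinearMap.range_eq_bot] at hbot
  exact hi hbot

lemma exists_comp_rangeRestrict_eq {g : V →ₗ[R] W} {f : V →ₗ[R] U} (h : ker g ≤ ker f) :
    ∃ φ : range g →ₗ[R] U, φ ∘ₗ g.rangeRestrict = f :=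
  ⟨(ker g).liftQ f h ∘ₗ g.quotKerEquivRange.symm, by
    ext v
    exact congrArg ((ker g).liftQ f h) (g.quotKerEquivRange_symm_apply_image v ⟨v, rfl⟩)⟩

lemma linearMap_ext_of_apply_eq_one {f : V →ₗ[R] R} {w : V} (hw : f w = 1) {g h : V →ₗ[R] W}
    (hker : ∀ u : ker f, g u = h u) (hgw : g w = h w) : g = h := by
  ext v
  have := hker ⟨v - f v • w, by simp [hw]⟩
  simpa [hgw] using this

/-- The projection of `V` onto the hyperplane `ker f` along a vector `x` with `f x = 1`. -/
def projKer (f : V →ₗ[R] R) (x : V) (hx : f x = 1) : V →ₗ[R] ker f :=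
  (LinearMap.id - f.smulRight x).codRestrict (ker f) fun v => by simp [hx]

@[simp]
lemma coe_projKer_apply {f : V →ₗ[R] R} {x : V} (hx : f x = 1) (v : V) :
    (projKer f x hx v : V) = v - f v • x := rfl

@[simp]
lemma projKer_self {f : V →ₗ[R] R} {x : V} (hx : f x = 1) : projKer f x hx x = 0 := by
  ext; simp [hx]

@[simp]
lemma projKer_coe {f : V →ₗ[R] R} {x : V} (hx : f x = 1) (u : ker f) : projKer f x hx u = u := by
  ext; simp

/-- The compression of `N` to the hyperplane `ker f` along a vector `x` with `f x = 1`: apply `N`,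
then project back. It carries the induction on the dimension. -/
def compression (N : End R V) (f : V →ₗ[R] R) (x : V) (hx : f x = 1) : End R (ker f) :=
  projKer f x hx ∘ₗ N ∘ₗ (ker f).subtype

lemma ker_compression_le {N : End R V} {f : V →ₗ[R] R} {w : V} (hw : f w = 1)
    (hNw : f (N w) = 1) (hNf : ker N ≤ ker f) :
    ker (compression N f (N w) hNw) ≤ ker (f ∘ₗ N ∘ₗ (ker f).subtype) := by
  intro u hu
  have hNu : N u - f (N u) • N w = 0 := congrArg Subtype.val hu
  have hmem : (u : V) - f (N u) • w ∈ ker N := by simpa using hNu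
  simpa [hw] using hNf hmem

lemma isNilpotent_compression {N : End R V} {f : V →ₗ[R] R} {w : V} (hNw : f (N w) = 1)
    (hN : IsNilpotent N) (hf : range (N ^ 2) ≤ ker f) :
    IsNilpotent (compression N f (N w) hNw) := by
  refine isNilpotent_comp_swap (f := projKer f (N w) hNw ∘ₗ N) (g := (ker f).subtype) ?_
  refine isNilpotent_of_mul_self_eq_mul hN (LinearMap.ext fun v => ?_)
  have hfNN (v : V) : f (N (N v)) = 0 := hf ⟨v, by simp [sq]⟩
  simp [hfNN]

end Ring

section Field

variable {F V W U : Type*} [Field F] [AddCommGroup V] [Module F V] [AddCommGroup W] [Module F W]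
  [AddCommGroup U] [Module F U]

lemma exists_comp_eq_of_ker_le {g : V →ₗ[F] W} {f : V →ₗ[F] U} (h : ker g ≤ ker f) :
    ∃ φ : W →ₗ[F] U, φ ∘ₗ g = f := by
  obtain ⟨φ₀, rfl⟩ := exists_comp_rangeRestrict_eq h
  obtain ⟨φ, rfl⟩ := LinearMap.exists_extend φ₀
  exact ⟨φ, rfl⟩

lemma exists_comp_eq_and_apply_eq {g : V →ₗ[F] W} {f : V →ₗ[F] U} (h : ker g ≤ ker f) {w : W}
    (hw : w ∉ range g) (u : U) : ∃ φ : W →ₗ[F] U, φ ∘ₗ g = f ∧ φ w = u := by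
  obtain ⟨φ₀, rfl⟩ := exists_comp_rangeRestrict_eq h
  obtain ⟨φ, rfl, hφ⟩ := LinearMap.exists_extend_of_notMem φ₀ hw u
  exact ⟨φ, rfl, hφ⟩

lemma exists_le_ker_and_apply_eq_one {p : Submodule F V} {v : V} (hv : v ∉ p) :
    ∃ f : V →ₗ[F] F, p ≤ ker f ∧ f v = 1 := by
  obtain ⟨f, hf, hfv⟩ := LinearMap.exists_extend_of_notMem (0 : p →ₗ[F] F) hv 1
  exact ⟨f, fun x hx => congr($hf ⟨x, hx⟩), hfv⟩

lemma HasNilpotentFactorization.of_compression {N : End F V} {f : V →ₗ[F] F} {w : V}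
    [Nontrivial (ker f)] (hw : f w = 1) (hNw : f (N w) = 1) (hNf : ker N ≤ ker f)
    (h : HasNilpotentFactorization (compression N f (N w) hNw)) : HasNilpotentFactorization N := by
  obtain ⟨s, t, hs, ht, hst⟩ := h
  let P := projKer f (N w) hNw
  set N' := compression N f (N w) hNw
  have hN'_apply (u : ker f) : (N' u : V) = N u - f (N u) • N w := rfl
  have hPN (u : ker f) : P (N u) = N' u := rfl
  have hP (u : ker f) : P u = u := projKer_coe hNw u
  have hPNw : P (N w) = 0 := projKer_self hNw
  have hstu (u : ker f) : N' (s (t (N' u))) = N' u := congr($hst u)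
  have hker : ker (t * N') ≤ ker (f ∘ₗ N ∘ₗ (ker f).subtype) := by
    refine le_trans (fun u hu => ?_) (ker_compression_le hw hNw hNf)
    rw [LinearMap.mem_ker, ← hstu, show t (N' u) = 0 from hu, map_zero, map_zero]
  obtain ⟨c, hc, hc_range⟩ := exists_mem_ker_notMem_range_of_isNilpotent hs hst
  obtain ⟨a, ha, hac⟩ := exists_comp_eq_and_apply_eq hker hc_range 1
  obtain ⟨φ, hφ⟩ := exists_comp_eq_of_ker_le hNf
  -- The rank-one terms of `S` and `T` restore the `N w`-component that the compression discards.
  let S : ker f →ₗ[F] V :=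
    (ker f).subtype ∘ₗ s + (a - f ∘ₗ N ∘ₗ (ker f).subtype ∘ₗ s).smulRight w
  let T : V →ₗ[F] ker f := t ∘ₗ P + φ.smulRight c
  have hNS (u : ker f) : N (S u) = N' (s u) + a u • N w := by
    simp only [S, hN'_apply, LinearMap.add_apply, LinearMap.comp_apply, LinearMap.smulRight_apply,
      LinearMap.sub_apply, Submodule.subtype_apply, map_add, map_smul]
    module
  have hTN (v : V) : T (N v) = t (P (N v)) + f v • c := by simp [T, ← hφ]
  have hPNS : P ∘ₗ N ∘ₗ S = N' * s := by ext u; simp [hNS, hP, hPNw]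
  have hTN' : (T ∘ₗ N) ∘ₗ (ker f).subtype = t * N' := by ext u; simp [hTN, hPN]
  refine ⟨S ∘ₗ P, (ker f).subtype ∘ₗ T, isNilpotent_comp_swap (f := N ∘ₗ S) (g := P) (hPNS ▸ hs),
    isNilpotent_comp_swap (f := (ker f).subtype) (g := T ∘ₗ N) (hTN' ▸ ht),
    linearMap_ext_of_apply_eq_one hw (fun u => ?_) ?_⟩
  · have hau : a (t (N' u)) = f (N u) := congr($ha u)
    simp [hTN, hPN, hP, hNS, hau, hstu, hN'_apply]
  · have hsc : N' (s c) = 0 := hc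
    simp [hTN, hP, hPNw, hNS, hac, hsc, hw]

lemma exists_compression_vector_of_sq_ne_zero {N : End F V} (hN : IsNilpotent N) (h2 : N ^ 2 ≠ 0) :
    ∃ (f : V →ₗ[F] F) (w : V), f w = 1 ∧ f (N w) = 1 ∧ ker N ≤ ker f ∧ range (N ^ 2) ≤ ker f := by
  obtain ⟨w, hw⟩ := exists_pow_apply_notMem_range_pow_succ hN h2
  have hNw : N w ∉ ker N ⊔ range (N ^ 2) := by
    intro h
    obtain ⟨z, hz, _, ⟨y, rfl⟩, hyz⟩ := Submodule.mem_sup.1 h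
    exact hw ⟨y, by simpa [pow_succ, LinearMap.mem_ker.1 hz] using congrArg N hyz⟩
  obtain ⟨f, hf, hfNw⟩ := exists_le_ker_and_apply_eq_one hNw
  obtain ⟨hfker, hfrange⟩ := sup_le_iff.1 hf
  have hfNN : f (N (N w)) = 0 := hfrange ⟨w, by simp [pow_succ]⟩
  exact ⟨f, w + (1 - f w) • N w, by simp [hfNw], by simp [hfNw, hfNN], hfker, hfrange⟩

lemma exists_isNilpotent_mul_add_smulRight_eq_one [FiniteDimensional F V] :
    ∃ (X Y : End F V) (l : V →ₗ[F] F) (c : V), IsNilpotent X ∧ Y * X + l.smulRight c = 1 := by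
  set r := finrank F V
  let b : Basis (Fin r) F V := finBasis F V
  -- Extending the basis by zero makes the shift `e i ↦ e (i + 1)` uniform in `i`.
  let e (i : ℕ) : V := if h : i < r then b ⟨i, h⟩ else 0
  have he (i : Fin r) : e i = b i := by simp [e]
  have he_of_le {i : ℕ} (hi : r ≤ i) : e i = 0 := by simp [e, hi]
  let X : End F V := b.constr F fun i => e (i + 1)
  let Y : End F V := b.constr F fun i => if (i : ℕ) = 0 then 0 else e (i - 1)
  let l : V →ₗ[F] F := b.constr F fun i => if (i : ℕ) + 1 = r then 1 else 0
  have hX (i : ℕ) : X (e i) = e (i + 1) := by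
    by_cases hi : i < r
    · exact (congrArg X (he ⟨i, hi⟩)).trans (b.constr_basis F _ ⟨i, hi⟩)
    · simp [he_of_le (not_lt.1 hi), he_of_le (show r ≤ i + 1 by omega)]
  have hY (i : ℕ) (hi : i + 1 < r) : Y (e (i + 1)) = e i :=
    (congrArg Y (he ⟨i + 1, hi⟩)).trans ((b.constr_basis F _ ⟨i + 1, hi⟩).trans (by simp))
  have hXpow (m i : ℕ) : (X ^ m) (e i) = e (m + i) := by
    induction m with
    | zero => simp
    | succ m ih => rw [pow_succ', End.mul_apply, ih, hX, add_right_comm]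
  refine ⟨X, Y, l, e (r - 1), ⟨r, b.ext fun i => ?_⟩, b.ext fun i => ?_⟩
  · rw [← he, hXpow, he_of_le (by omega), LinearMap.zero_apply]
  · have hl : l (e i) = if (i : ℕ) + 1 = r then 1 else 0 :=
      (congrArg l (he i)).trans (b.constr_basis F _ i)
    rw [← he, LinearMap.add_apply, LinearMap.smulRight_apply, End.mul_apply, End.one_apply, hX, hl]
    by_cases hi : (i : ℕ) + 1 < r
    · simp [hY _ hi, hi.ne]
    · have hir : (i : ℕ) + 1 = r := by omega
      simp [he_of_le hir.ge, ← hir]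

lemma exists_mem_ker_notMem_span_singleton [FiniteDimensional F V] {N : End F V} (h2 : N ^ 2 = 0)
    (hV : 3 ≤ finrank F V) (x : V) : ∃ k ∈ ker N, k ∉ Submodule.span F {x} := by
  by_contra! h
  have hker : finrank F (ker N) ≤ 1 :=
    (Submodule.finrank_mono h).trans (by simpa using finrank_span_le_card (R := F) {x})
  have hrange : range N ≤ ker N := LinearMap.range_le_ker_iff.2 (by rwa [← End.mul_eq_comp, ← sq])
  have := Submodule.finrank_mono hrange
  have := N.finrank_range_add_finrank_ker
  omega

lemma exists_mem_ker_apply_eq_one_of_sq_eq_zero [FiniteDimensional F V] {N : End F V}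
    (h2 : N ^ 2 = 0) (hV : 3 ≤ finrank F V) {C : Submodule F V} (hC : Disjoint (ker N) C) (x : V) :
    ∃ k ∈ ker N, ∃ φ : V →ₗ[F] F, C ≤ ker φ ∧ φ (N x) = 0 ∧ φ k = 1 := by
  obtain ⟨k, hk, hkx⟩ := exists_mem_ker_notMem_span_singleton h2 hV (N x)
  have hkC : k ∉ C ⊔ Submodule.span F {N x} := by
    intro h
    obtain ⟨u, hu, v, hv, rfl⟩ := Submodule.mem_sup.1 h
    have hNv : v ∈ ker N :=
      (Submodule.span_singleton_le_iff_mem _ _).2 congr($h2 x) hv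
    have hNu : u ∈ ker N := (Submodule.add_mem_iff_left _ hNv).1 hk
    have hu0 : u = 0 := Submodule.disjoint_def.1 hC u hNu hu
    exact hkx (by simpa [hu0] using hv)
  obtain ⟨φ, hφ, hφk⟩ := exists_le_ker_and_apply_eq_one hkC
  obtain ⟨hφC, hφx⟩ := sup_le_iff.1 hφ
  exact ⟨k, hk, φ, hφC, hφx (Submodule.mem_span_singleton_self _), hφk⟩

lemma hasNilpotentFactorization_of_sq_eq_zero [FiniteDimensional F V] {N : End F V}
    (h2 : N ^ 2 = 0) (hV : 3 ≤ finrank F V) : HasNilpotentFactorization N := by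
  have hNN (v : V) : N (N v) = 0 := congr($h2 v)
  obtain ⟨C, hC⟩ := (ker N).exists_isCompl
  let p : V →ₗ[F] C := C.projectionOnto (ker N) hC.symm
  have hpC (u : C) : p u = u := Submodule.projectionOnto_apply_left hC.symm u
  have hp_eq_zero {v : V} (hv : v ∈ ker N) : p v = 0 :=
    (Submodule.projectionOnto_apply_eq_zero_iff hC.symm).2 hv
  have hNp (v : V) : N (p v) = N v := by
    have hker : N ((ker N).projection C hC v) = 0 := Submodule.projection_apply_mem hC v
    simpa [p, hker] using congrArg N (Submodule.projection_add_projection_eq_self hC.symm v)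
  obtain ⟨X, Y, l, c, hX, hYX⟩ := exists_isNilpotent_mul_add_smulRight_eq_one (F := F) (V := C)
  obtain ⟨k, hk, φ, hφC, hφc, hφk⟩ :=
    exists_mem_ker_apply_eq_one_of_sq_eq_zero h2 hV hC.disjoint (c : V)
  let B : C →ₗ[F] V := C.subtype ∘ₗ X + l.smulRight k
  let S : End F V := C.subtype ∘ₗ Y ∘ₗ p + φ.smulRight (c : V)
  obtain ⟨T, hT⟩ : ∃ T : End F V, T ∘ₗ N = B ∘ₗ p :=
    exists_comp_eq_of_ker_le fun v hv => by simp [hp_eq_zero hv]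
  have hpB : p ∘ₗ B = X := by ext u; simp [B, hpC, hp_eq_zero hk]
  have hSB (u : C) : S (B u) = u := by
    have hφu (u : C) : φ u = 0 := hφC u.2
    have hu : Y (X u) + l u • c = u := congr($hYX u)
    simpa [S, B, hpC, hp_eq_zero hk, hφu, hφk] using congrArg Subtype.val hu
  refine ⟨S, T, ⟨3, ?_⟩, ?_, ?_⟩
  · ext v
    have hpN (v : V) : p (N v) = 0 := hp_eq_zero (hNN v)
    simp [pow_succ, S, hpN, hφc]
  · rw [End.mul_eq_comp, hT]
    exact isNilpotent_comp_swap (hpB ▸ hX)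
  · ext v
    have hTN : T (N v) = B (p v) := congr($hT v)
    simp [hTN, hSB, hNp]

lemma pow_finrank_eq_zero_of_isNilpotent [FiniteDimensional F V] {N : End F V}
    (hN : IsNilpotent N) : N ^ finrank F V = 0 := by
  simpa [hN.charpoly_eq_X_pow_finrank] using N.aeval_self_charpoly

lemma linearIndependent_pow_apply {N : End F V} {m : ℕ} {w : V} (hm : (N ^ m) w ≠ 0)
    (hm' : (N ^ (m + 1)) w = 0) : LinearIndependent F fun i : Fin (m + 1) => (N ^ (i : ℕ)) w := by
  induction m generalizing w with
  | zero => exact (linearIndependent_unique_iff (ι := Fin 1)).2 hm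
  | succ m ih =>
    have hcons : (fun i : Fin (m + 2) => (N ^ (i : ℕ)) w) =
        Fin.cons w fun i : Fin (m + 1) => (N ^ (i : ℕ)) (N w) := by
      ext i
      refine Fin.cases (by simp) (fun i => by simp [pow_succ]) i
    rw [hcons]
    refine linearIndependent_finCons.2 ⟨ih (by simpa [pow_succ] using hm)
      (by simpa [pow_succ] using hm'), fun hw => hm ?_⟩
    refine (Submodule.span_le (p := ker (N ^ (m + 1)))).2 ?_ hw
    rintro _ ⟨i, rfl⟩
    change (N ^ (m + 1) * (N ^ (i : ℕ) * N)) w = 0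
    rw [← pow_succ, ← pow_add, show m + 1 + (i + 1) = i + (m + 2) by omega, pow_add, End.mul_apply,
      hm', map_zero]

lemma hasNilpotentFactorization_jordanBlock_three {R : Type*} [Semiring R] :
    HasNilpotentFactorization !![0, 0, 0; 1, 0, 0; 0, (1 : R), 0] := by
  refine ⟨!![0, 0, 1; 1, 0, 0; 0, 0, 0], !![0, 0, 1; 0, 0, 0; 0, 1, 0], ⟨3, ?_⟩, ⟨3, ?_⟩, ?_⟩ <;>
  · ext i j
    fin_cases i <;> fin_cases j <;> simp [pow_succ]

lemma hasNilpotentFactorization_of_finrank_eq_three {N : End F V} (hN : IsNilpotent N)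
    (h2 : N ^ 2 ≠ 0) (hV : finrank F V = 3) : HasNilpotentFactorization N := by
  have : FiniteDimensional F V := FiniteDimensional.of_finrank_eq_succ hV
  have h3 : N ^ 3 = 0 := hV ▸ pow_finrank_eq_zero_of_isNilpotent hN
  obtain ⟨w, hw⟩ := DFunLike.ne_iff.1 h2
  have h3w : (N ^ 3) w = 0 := congr($h3 w)
  let b := basisOfLinearIndependentOfCardEqFinrank (linearIndependent_pow_apply hw h3w)
    (by simp [hV])
  have hb (i : Fin 3) : b i = (N ^ (i : ℕ)) w := by simp [b]
  have hNb : N = Matrix.toLinAlgEquiv b !![0, 0, 0; 1, 0, 0; 0, 1, 0] := by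
    refine b.ext fun j => ?_
    have hNbj : N (b j) = (N ^ (j + 1 : ℕ)) w := by rw [hb, pow_succ', End.mul_apply]
    rw [hNbj, Matrix.toLinAlgEquiv_self]
    fin_cases j <;> simp [Fin.sum_univ_three, hb, h3]
  exact hNb ▸ hasNilpotentFactorization_jordanBlock_three.map (Matrix.toLinAlgEquiv b)

theorem hasNilpotentFactorization_of_three_le_finrank {N : End F V} (hN : IsNilpotent N)
    (hV : 3 ≤ finrank F V) : HasNilpotentFactorization N := by
  have : FiniteDimensional F V := FiniteDimensional.of_finrank_pos (by omega)
  generalize hn : finrank F V = n at hV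
  induction n, hV using Nat.le_induction generalizing V with
  | base =>
    by_cases h2 : N ^ 2 = 0
    · exact hasNilpotentFactorization_of_sq_eq_zero h2 hn.ge
    · exact hasNilpotentFactorization_of_finrank_eq_three hN h2 hn
  | succ n hn3 ih =>
    by_cases h2 : N ^ 2 = 0
    · exact hasNilpotentFactorization_of_sq_eq_zero h2 (by omega)
    obtain ⟨f, w, hw, hNw, hker, hrange⟩ := exists_compression_vector_of_sq_ne_zero hN h2
    have hf : f ≠ 0 := by rintro rfl; simp at hw
    have hdim : finrank F (ker f) = n := by
      have := Dual.finrank_ker_add_one_of_ne_zero hf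
      omega
    have : Nontrivial (ker f) := nontrivial_of_finrank_pos (R := F) (by omega)
    exact .of_compression hw hNw hker
      (ih (isNilpotent_compression hNw hN hrange) inferInstance hdim)

theorem hasNilpotentFactorization_of_finrank_ne_two [FiniteDimensional F V] {N : End F V}
    (hN : IsNilpotent N) (hV : finrank F V ≠ 2) : HasNilpotentFactorization N := by
  obtain hV | hV : finrank F V ≤ 1 ∨ 3 ≤ finrank F V := by omega
  · have hN0 : N = 0 := by
      simpa using pow_eq_zero_of_le hV (pow_finrank_eq_zero_of_isNilpotent hN)
    exact hN0 ▸ hasNilpotentFactorization_zero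
  · exact hasNilpotentFactorization_of_three_le_finrank hN hV

end Field

lemma HasNilpotentFactorization.exists_rank_eq {R ι : Type*} [CommRing R] [Nontrivial R]
    [Fintype ι] [DecidableEq ι] {A : Matrix ι ι R} (h : HasNilpotentFactorization A) :
    ∃ B C : Matrix ι ι R, IsNilpotent B ∧ IsNilpotent C ∧ A = B * C ∧
      B.rank = A.rank ∧ C.rank = A.rank := by
  obtain ⟨S, T, hS, hT, hST⟩ := h
  refine ⟨A * S, T * A, hS, hT, hST.symm, (A.rank_mul_le_left S).antisymm ?_,
    (T.rank_mul_le_right A).antisymm ?_⟩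
  · simpa only [hST] using (A * S).rank_mul_le_left (T * A)
  · simpa only [hST] using (A * S).rank_mul_le_right (T * A)

theorem nilpotent_is_product_of_two_nilpotents_of_same_rank_general {F ι : Type*} [Field F]
    [Fintype ι] [DecidableEq ι] (hι : Fintype.card ι ≠ 2) (N : Matrix ι ι F)
    (hN : IsNilpotent N) :
    ∃ N₁ N₂ : Matrix ι ι F,
      IsNilpotent N₁ ∧ IsNilpotent N₂ ∧ N = N₁ * N₂ ∧
      N₁.rank = N.rank ∧ N₂.rank = N.rank := by
  have h := hasNilpotentFactorization_of_finrank_ne_two (hN.map (Matrix.toLinAlgEquiv' (R := F)))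
    (by simpa using hι)
  exact HasNilpotentFactorization.exists_rank_eq (by simpa using h.map Matrix.toLinAlgEquiv'.symm)

/-- For `n ≠ 2`, every nilpotent `n × n` matrix over a field is a product of two
nilpotent matrices, each of the same rank as `N`. -/
theorem nilpotent_is_product_of_two_nilpotents_of_same_rank
    (F : Type*) [Field F] (n : ℕ) (hn : 0 < n) (hn2 : n ≠ 2)
    (N : Matrix (Fin n) (Fin n) F) (hN : IsNilpotent N) :
    ∃ N₁ N₂ : Matrix (Fin n) (Fin n) F,
      IsNilpotent N₁ ∧ IsNilpotent N₂ ∧ N = N₁ * N₂ ∧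
      N₁.rank = N.rank ∧ N₂.rank = N.rank :=
  nilpotent_is_product_of_two_nilpotents_of_same_rank_general (by simpa using hn2) N hN
end
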